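/- arXiv:cond-mat/0509689 — 4 statements merged into one kernel-verified Lean document; each statement's English description precedes it below -/
import Mathlib

section
/- The function f(x) = A_q (1 - β(q-1) xᵀC⁻¹x)^{1/(q-1)} on ℝⁿ, with q > 1, β = 1/(2q - n(1-q)), C a symmetric positive definite n×n matrix, and A_q = Γ(q/(q-1) + n/2) (β(q-1))^{n/2} / (Γ(q/(q-1)) π^{n/2} |C|^{1/2}), restricted to the ellipsoidal support {x : xᵀC⁻¹x ≤ 1/(β(q-1))}, is a probability density, i.e., its integral over ℝⁿ equals 1. -/
open MeasureTheory Real Matrix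

open scoped MatrixOrder in
lemma tsallis_sqrt {n : ℕ} (A : Matrix (Fin n) (Fin n) ℝ) (hA : A.PosDef) :
    ∃ M : Matrix (Fin n) (Fin n) ℝ, A = Mᵀ * M := by
  obtain ⟨B, hB⟩ := CStarAlgebra.nonneg_iff_eq_star_mul_self.mp hA.posSemidef.nonneg
  exact ⟨B, by rw [hB, Matrix.star_eq_conjTranspose, Matrix.conjTranspose_eq_transpose_of_trivial]⟩

lemma tsallis_beta (a b : ℝ) (ha : 0 < a) (hb : 0 < b) :
    ∫ x in Set.Ioi (0:ℝ), ProbabilityTheory.betaPDFReal a b x = 1 := by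
  have h0 : ∫ x, ProbabilityTheory.betaPDFReal a b x = 1 := by
    rw [integral_eq_lintegral_of_nonneg_ae]
    · have := ProbabilityTheory.lintegral_betaPDF_eq_one ha hb
      simp only [ProbabilityTheory.betaPDF] at this
      rw [this]; simp
    · refine Filter.Eventually.of_forall fun x => ?_
      by_cases h : 0 < x ∧ x < 1
      · exact (ProbabilityTheory.betaPDFReal_pos h.1 h.2 ha hb).le
      · simp [ProbabilityTheory.betaPDFReal, h]
    · exact (ProbabilityTheory.stronglyMeasurable_betaPDFReal a b).aestronglyMeasurable
  rw [← h0]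
  apply setIntegral_eq_integral_of_forall_compl_eq_zero
  intro x hx
  have : ¬ (0 < x ∧ x < 1) := fun h => hx h.1
  simp [ProbabilityTheory.betaPDFReal, this]

lemma tsallis_radial (n : ℕ) (hn : 1 ≤ n) (p : ℝ) (hp : 0 < p) :
    ∫ y in Set.Ioi (0:ℝ), y ^ (n - 1) • (if y ^ 2 ≤ 1 then (1 - y ^ 2) ^ p else 0)
      = ProbabilityTheory.beta ((n:ℝ) / 2) (p + 1) / 2 := by
  have hn' : (0:ℝ) < n / 2 := by positivity
  have hB := ProbabilityTheory.beta_pos hn' (show 0 < p + 1 by linarith)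
  have h := integral_comp_rpow_Ioi_of_pos
    (g := ProbabilityTheory.betaPDFReal ((n:ℝ) / 2) (p + 1)) (p := 2) two_pos
  rw [tsallis_beta _ _ hn' (by linarith)] at h
  have h' := congrArg (fun t => ProbabilityTheory.beta ((n:ℝ) / 2) (p + 1) / 2 * t) h
  simp only [mul_one] at h'
  rw [← h', ← integral_const_mul]
  refine setIntegral_congr_fun measurableSet_Ioi fun y hy => ?_
  have hy : 0 < y := hy
  simp only [ProbabilityTheory.betaPDFReal, smul_eq_mul, Real.rpow_two]
  have e : y ^ (n - 1) = y * (y ^ 2) ^ ((n:ℝ) / 2 - 1) := by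
    rw [← Real.rpow_two, ← Real.rpow_mul hy.le, ← Real.rpow_natCast, Nat.cast_sub hn]
    conv_rhs => rw [← Real.rpow_one y, ← Real.rpow_mul hy.le, ← Real.rpow_add hy]
    congr 1
    push_cast; ring
  rcases lt_trichotomy (y ^ 2) 1 with h1 | h1 | h1
  · rw [if_pos h1.le, if_pos ⟨by positivity, h1⟩, e]
    have : (2:ℝ) - 1 = 1 := by norm_num
    rw [this, Real.rpow_one, add_sub_cancel_right]
    field_simp
  · simp [h1, Real.zero_rpow hp.ne']
  · simp [h1.not_ge, h1.not_gt]

lemma tsallis_ball (n : ℕ) (hn : 1 ≤ n) (p : ℝ) (hp : 0 < p) :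
    ∫ x : Fin n → ℝ, (if x ⬝ᵥ x ≤ 1 then (1 - x ⬝ᵥ x) ^ p else 0)
      = π ^ ((n:ℝ) / 2) * Real.Gamma (p + 1) / Real.Gamma (p + 1 + n / 2) := by
  haveI : Nonempty (Fin n) := ⟨⟨0, hn⟩⟩
  have hn' : (0:ℝ) < n / 2 := by positivity
  have h := integral_fun_norm_addHaar (volume : Measure (EuclideanSpace ℝ (Fin n)))
    (fun y : ℝ => if y ^ 2 ≤ 1 then (1 - y ^ 2) ^ p else 0)
  rw [finrank_euclideanSpace, Fintype.card_fin, tsallis_radial n hn p hp] at h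
  rw [← (PiLp.volume_preserving_toLp (Fin n)).integral_comp
    (MeasurableEquiv.toLp 2 (Fin n → ℝ)).measurableEmbedding] at h
  have e : ∀ x : Fin n → ℝ, ‖WithLp.toLp 2 x‖ ^ 2 = x ⬝ᵥ x := by
    intro x
    rw [EuclideanSpace.real_norm_sq_eq]
    simp [dotProduct, sq]
  simp only [e] at h
  rw [h, Measure.real, EuclideanSpace.volume_ball]
  have hG := Real.Gamma_pos_of_pos hn'
  have hG2 := Real.Gamma_pos_of_pos (show 0 < p + 1 + n / 2 by linarith)
  rw [Fintype.card_fin, Real.Gamma_add_one hn'.ne', ENNReal.ofReal_one, one_pow, one_mul,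
    ENNReal.toReal_ofReal (by positivity), ProbabilityTheory.beta, add_comm ((n:ℝ)/2) (p+1)]
  have : √π ^ n = π ^ ((n:ℝ)/2) := by
    rw [Real.sqrt_eq_rpow, ← Real.rpow_natCast, ← Real.rpow_mul pi_pos.le]
    congr 1; ring
  rw [this]
  simp only [smul_eq_mul, nsmul_eq_mul]
  have : (n:ℝ) ≠ 0 := by positivity
  field_simp

/-- For `q > 1`, the Tsallis density
`f(x) = A_q (1 - β(q-1) xᵀC⁻¹x)^{1/(q-1)}`, restricted to the ellipsoidal
support `{x : xᵀC⁻¹x ≤ 1/(β(q-1))}`, integrates to 1 over `ℝⁿ`. -/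
theorem tsallis_q_gt_one_is_density (n : ℕ) (hn : 1 ≤ n) (q : ℝ) (hq : 1 < q)
    (C : Matrix (Fin n) (Fin n) ℝ) (hCsymm : C.IsSymm) (hC : C.PosDef)
    (β Aq : ℝ)
    (hβ : β = 1 / (2 * q - n * (1 - q)))
    (hA : Aq = Real.Gamma (q / (q - 1) + n / 2) * (β * (q - 1)) ^ ((n : ℝ) / 2) /
        (Real.Gamma (q / (q - 1)) * Real.pi ^ ((n : ℝ) / 2) * Real.sqrt C.det)) :
    ∫ x : Fin n → ℝ,
      Set.indicator {x : Fin n → ℝ | x ⬝ᵥ C⁻¹.mulVec x ≤ 1 / (β * (q - 1))}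
        (fun x => Aq * (1 - β * (q - 1) * (x ⬝ᵥ C⁻¹.mulVec x)) ^ (1 / (q - 1))) x = 1 := by
  have hq0 : 0 < q - 1 := by linarith
  have hβ0 : 0 < β := by
    rw [hβ]
    apply one_div_pos.2
    have : (0:ℝ) ≤ n * (q - 1) := by positivity
    nlinarith
  have hk : 0 < β * (q - 1) := mul_pos hβ0 hq0
  set k := β * (q - 1) with hkdef
  have hp : 0 < 1 / (q - 1) := by positivity
  have hpq : q / (q - 1) = 1 / (q - 1) + 1 := by field_simp; ring
  rw [hpq] at hA
  set p := 1 / (q - 1) with hpdef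
  have hdet := hC.det_pos
  obtain ⟨M, hM⟩ := tsallis_sqrt (k • C⁻¹) (hC.inv.smul hk)
  have hMdet : M.det ^ 2 = k ^ n / C.det := by
    have := congrArg Matrix.det hM
    rw [Matrix.det_mul, Matrix.det_transpose, Matrix.det_smul, Fintype.card_fin,
      Matrix.det_nonsing_inv, Ring.inverse_eq_inv'] at this
    rw [sq, ← this, div_eq_mul_inv]
  have hM0 : M.det ≠ 0 := by
    intro h
    rw [h] at hMdet
    have : 0 < k ^ n / C.det := by positivity
    rw [← hMdet] at this
    norm_num at this
  have hMabs : |M.det| = k ^ ((n:ℝ)/2) / √C.det := by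
    rw [← Real.sqrt_sq_eq_abs, hMdet, Real.sqrt_div (by positivity), Real.sqrt_eq_rpow (k ^ n),
      ← Real.rpow_natCast, ← Real.rpow_mul hk.le]
    congr 2; ring
  have hquad : ∀ x : Fin n → ℝ, (M *ᵥ x) ⬝ᵥ (M *ᵥ x) = k * (x ⬝ᵥ C⁻¹ *ᵥ x) := by
    intro x
    rw [← smul_eq_mul, ← dotProduct_smul, ← Matrix.smul_mulVec, hM, ← Matrix.mulVec_mulVec,
      Matrix.dotProduct_mulVec x, Matrix.vecMul_transpose]
  have hfun : ∀ x : Fin n → ℝ,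
      Set.indicator {x : Fin n → ℝ | x ⬝ᵥ C⁻¹.mulVec x ≤ 1 / k}
        (fun x => Aq * (1 - k * (x ⬝ᵥ C⁻¹.mulVec x)) ^ p) x
      = Aq * (fun y : Fin n → ℝ => if y ⬝ᵥ y ≤ 1 then (1 - y ⬝ᵥ y) ^ p else 0)
          (Matrix.toLin' M x) := by
    intro x
    simp only [Matrix.toLin'_apply, hquad, Set.indicator_apply, Set.mem_setOf_eq,
      le_div_iff₀' hk]
    split_ifs <;> simp
  simp_rw [hfun]
  rw [integral_const_mul]
  have hmeas : Measurable (fun y : Fin n → ℝ => if y ⬝ᵥ y ≤ 1 then (1 - y ⬝ᵥ y) ^ p else 0) := by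
    have : Measurable (fun y : Fin n → ℝ => y ⬝ᵥ y) := by
      unfold dotProduct; fun_prop
    exact Measurable.ite (measurableSet_le this measurable_const) (by fun_prop) measurable_const
  rw [← integral_map (φ := Matrix.toLin' M) (μ := volume)
    (LinearMap.continuous_of_finiteDimensional _).measurable.aemeasurable
    hmeas.aestronglyMeasurable,
    Real.map_matrix_volume_pi_eq_smul_volume_pi hM0, integral_smul_measure,
    tsallis_ball n hn p hp, ENNReal.toReal_ofReal (abs_nonneg _), abs_inv, hMabs, hA, smul_eq_mul]
  have h1 := Real.Gamma_pos_of_pos (show 0 < p + 1 by linarith)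
  have h2 := Real.Gamma_pos_of_pos (show 0 < p + 1 + n / 2 by positivity)
  have h3 : 0 < √C.det := Real.sqrt_pos.2 hdet
  have h4 : 0 < k ^ ((n:ℝ)/2) := by positivity
  have h5 : 0 < π ^ ((n:ℝ)/2) := by positivity
  field_simp
end

section
/- Let X be distributed according to the n-variate Tsallis density with parameter q, n/(n+2) < q < 1, and covariance C, and let m = 2/(1-q) - n. Then the random vector Y = X / √(1 + Xᵀ C⁻¹ X/(m-2)) is distributed according to the n-variate Tsallis density with parameter q* and covariance C*, where 1/(q*-1) = 1/(1-q) - n/2 - 1 and C* = C (m-2)/(m+n). -/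
open MeasureTheory Real Matrix

lemma tsallis_core {n : ℕ} (Q : (Fin n → ℝ) → ℝ) (hQd : Differentiable ℝ Q)
    (hQh : ∀ (t : ℝ) x, Q (t • x) = t ^ 2 * Q x) (hQ0 : ∀ x, 0 ≤ Q x)
    (k s p A : ℝ) (hk : 0 < k) (hs : 0 < s) (hp : p = s + n / 2 + 1) :
    ((volume : Measure (Fin n → ℝ)).withDensity fun x =>
        ENNReal.ofReal (A * (1 + Q x / k) ^ (-p))).map
      (fun x : Fin n → ℝ => (√(1 + Q x / k))⁻¹ • x)
      = (volume : Measure (Fin n → ℝ)).withDensity fun y =>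
          ENNReal.ofReal (Set.indicator {y : Fin n → ℝ | Q y ≤ k}
            (fun y => A * (1 - Q y / k) ^ s) y) := by
  set φ : (Fin n → ℝ) → ℝ := fun x => (√(1 + Q x / k))⁻¹ with hφ
  have hw : ∀ x, 0 < 1 + Q x / k := fun x => by have := hQ0 x; positivity
  have hφpos : ∀ x, 0 < φ x := fun x => inv_pos.2 (Real.sqrt_pos.2 (hw x))
  have hφsq : ∀ x, φ x ^ 2 = (1 + Q x / k)⁻¹ := fun x => by
    simp only [hφ, inv_pow, Real.sq_sqrt (hw x).le]
  have hφd : Differentiable ℝ φ := by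
    intro x
    refine DifferentiableAt.inv (DifferentiableAt.sqrt ?_ (hw x).ne') (Real.sqrt_pos.2 (hw x)).ne'
    have hQx := hQd x
    fun_prop
  -- Euler identity
  have hφx : ∀ x, fderiv ℝ φ x x = - φ x * (1 - (1 + Q x / k)⁻¹) := by
    intro x
    have h1 : HasDerivAt (fun t : ℝ => φ (t • x)) (fderiv ℝ φ x x) 1 := by
      have hl : HasDerivAt (fun t : ℝ => t • x) x 1 := by
        simpa using (hasDerivAt_id (1 : ℝ)).smul_const x
      have hf : HasFDerivAt φ (fderiv ℝ φ x) ((1 : ℝ) • x) := by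
        rw [one_smul]; exact (hφd x).hasFDerivAt
      exact hf.comp_hasDerivAt (1 : ℝ) hl
    have h2 : HasDerivAt (fun t : ℝ => φ (t • x)) (- φ x * (1 - (1 + Q x / k)⁻¹)) 1 := by
      have e : (fun t : ℝ => φ (t • x)) = fun t => (√(1 + t ^ 2 * Q x / k))⁻¹ := by
        funext t; simp only [hφ, hQh]
      rw [e]
      have h3 : HasDerivAt (fun t : ℝ => 1 + t ^ 2 * Q x / k) (2 * Q x / k) 1 := by
        have := ((((hasDerivAt_id (1:ℝ)).pow 2).mul_const (Q x)).div_const k).const_add 1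
        simpa using this
      have hw1 : 1 + (1:ℝ) ^ 2 * Q x / k = 1 + Q x / k := by ring
      have h4 := (h3.sqrt (by rw [hw1]; exact (hw x).ne')).fun_inv
        (by rw [hw1]; exact (Real.sqrt_pos.2 (hw x)).ne')
      convert! h4 using 1
      rw [hw1]
      have hsq := Real.sq_sqrt (hw x).le
      have hpos := Real.sqrt_pos.2 (hw x)
      simp only [hφ]
      have hw2 : Q x / k = √(1 + Q x / k) ^ 2 - 1 := by rw [hsq]; ring
      have hw3 : 2 * Q x / k = 2 * (√(1 + Q x / k) ^ 2 - 1) := by rw [← hw2]; ring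
      rw [hw3]
      nth_rw 2 [← hsq]
      generalize √(1 + Q x / k) = r at hpos ⊢
      field_simp
    exact h1.unique h2
  set T : (Fin n → ℝ) → (Fin n → ℝ) := fun x => φ x • x with hT
  set T' : (Fin n → ℝ) → ((Fin n → ℝ) →L[ℝ] (Fin n → ℝ)) := fun x =>
    φ x • ContinuousLinearMap.id ℝ _ + (fderiv ℝ φ x).smulRight x with hT'
  have hTd : ∀ x, HasFDerivAt T (T' x) x := fun x =>
    (hφd x).hasFDerivAt.smul (hasFDerivAt_id x)
  have hdet : ∀ x, (T' x).det = (1 + Q x / k) ^ (-((n:ℝ) / 2 + 1)) := by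
    intro x
    have e : ((T' x : (Fin n → ℝ) →L[ℝ] (Fin n → ℝ)) : (Fin n → ℝ) →ₗ[ℝ] (Fin n → ℝ))
        = φ x • LinearMap.transvection
          ((φ x)⁻¹ • ((fderiv ℝ φ x : (Fin n → ℝ) →L[ℝ] ℝ) : (Fin n → ℝ) →ₗ[ℝ] ℝ)) x := by
      ext1 i
      ext j
      simp [hT', LinearMap.transvection.apply]
      have := (hφpos x).ne'
      field_simp
    rw [ContinuousLinearMap.det, e, LinearMap.det_smul, LinearMap.transvection.det]
    simp only [Module.finrank_fin_fun, LinearMap.smul_apply, ContinuousLinearMap.coe_coe, hφx,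
      smul_eq_mul]
    have h5 : 1 + (φ x)⁻¹ * (-φ x * (1 - (1 + Q x / k)⁻¹)) = (1 + Q x / k)⁻¹ := by
      have := (hφpos x).ne'
      field_simp
      ring
    rw [h5, neg_add, Real.rpow_add (hw x), Real.rpow_neg_one]
    congr 1
    simp only [hφ]
    rw [Real.sqrt_eq_rpow, ← Real.rpow_neg (hw x).le, ← Real.rpow_natCast,
      ← Real.rpow_mul (hw x).le]
    congr 1; ring
  have hQT : ∀ x, 1 - Q (T x) / k = (1 + Q x / k)⁻¹ := by
    intro x
    have := (hw x).ne'
    have h2 : k + Q x ≠ 0 := by have := hQ0 x; positivity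
    simp only [hT, hQh, hφsq]
    field_simp
    ring
  have hinj : Function.Injective T := by
    intro x y hxy
    have h1 : (1 + Q x / k)⁻¹ = (1 + Q y / k)⁻¹ := by rw [← hQT, ← hQT, hxy]
    have h2 : φ x = φ y := by simp only [hφ, inv_injective h1]
    have h3 : φ x • x = φ y • y := hxy
    rw [h2] at h3
    exact smul_right_injective _ (hφpos y).ne' h3
  have hrange : ∀ y, Q y < k → ∃ x, T x = y := by
    intro y hy
    have hv : 0 < 1 - Q y / k := by rw [sub_pos, div_lt_one hk]; exact hy
    refine ⟨(√(1 - Q y / k))⁻¹ • y, ?_⟩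
    have : 1 + Q ((√(1 - Q y / k))⁻¹ • y) / k = (1 - Q y / k)⁻¹ := by
      have h2 : k - Q y ≠ 0 := (sub_pos.2 hy).ne'
      rw [hQh, inv_pow, Real.sq_sqrt hv.le]
      field_simp
      ring
    simp only [hT, hφ, this, smul_smul, Real.sqrt_inv, inv_inv]
    rw [mul_inv_cancel₀ (Real.sqrt_pos.2 hv).ne', one_smul]
  have hTm : Measurable T := (continuous_iff_continuousAt.2
    fun x => (hTd x).continuousAt).measurable
  ext S hS
  rw [Measure.map_apply hTm hS, withDensity_apply _ (hTm hS), withDensity_apply _ hS]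
  set g : (Fin n → ℝ) → ENNReal := fun y => ENNReal.ofReal
    (Set.indicator {y : Fin n → ℝ | Q y ≤ k} (fun y => A * (1 - Q y / k) ^ s) y) with hg
  have hcv := lintegral_image_eq_lintegral_abs_det_fderiv_mul (volume : Measure (Fin n → ℝ))
    (hTm hS) (fun x _ => (hTd x).hasFDerivWithinAt) hinj.injOn g
  have hl : ∫⁻ x in T ⁻¹' S, ENNReal.ofReal (A * (1 + Q x / k) ^ (-p))
      = ∫⁻ x in T ⁻¹' S, ENNReal.ofReal |(T' x).det| * g (T x) := by
    refine lintegral_congr fun x => ?_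
    have hmem : T x ∈ {y : Fin n → ℝ | Q y ≤ k} := by
      have h1 := hQT x
      have h2 := inv_pos.2 (hw x)
      rw [← h1, sub_pos, div_lt_one hk] at h2
      exact h2.le
    simp only [hg]
    rw [Set.indicator_of_mem hmem, ← ENNReal.ofReal_mul (abs_nonneg _), hdet, hQT,
      abs_of_pos (Real.rpow_pos_of_pos (hw x) _), Real.inv_rpow (hw x).le,
      ← Real.rpow_neg (hw x).le]
    congr 1
    rw [mul_left_comm, ← Real.rpow_add (hw x)]
    congr 2
    rw [hp]; ring
  rw [hl, ← hcv, Set.image_preimage_eq_inter_range]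
  have hzero : ∀ y, y ∉ Set.range T → g y = 0 := by
    intro y hy
    have hy' : k ≤ Q y := by
      by_contra h
      exact hy (hrange y (not_le.1 h))
    simp only [hg]
    by_cases hyk : Q y ≤ k
    · have : Q y = k := le_antisymm hyk hy'
      simp [this, hk.ne', hs.ne', Real.zero_rpow]
    · simp [hyk]
  have hR : MeasurableSet (Set.range T) := by
    rw [← Set.image_univ]
    exact measurable_image_of_fderivWithin MeasurableSet.univ
      (fun x _ => (hTd x).hasFDerivWithinAt) hinj.injOn
  rw [Set.inter_comm, ← Measure.restrict_restrict hR, ← lintegral_indicator hR]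
  refine lintegral_congr fun y => ?_
  by_cases hy : y ∈ Set.range T
  · rw [Set.indicator_of_mem hy]
  · rw [Set.indicator_of_notMem hy]; exact (hzero y hy).symm

/-- Duality: if `X` is Tsallis with parameter `n/(n+2) < q < 1` and covariance `C`,
and `m = 2/(1-q) - n`, then `Y = X/√(1 + XᵀC⁻¹X/(m-2))` is Tsallis with parameter
`q*` given by `1/(q*-1) = 1/(1-q) - n/2 - 1` and covariance `C* = C (m-2)/(m+n)`. -/
theorem tsallis_duality (n : ℕ) (hn : 1 ≤ n) (q : ℝ)
    (hq1 : (n : ℝ) / (n + 2) < q) (hq2 : q < 1)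
    (C : Matrix (Fin n) (Fin n) ℝ) (hCsymm : C.IsSymm) (hC : C.PosDef)
    (m β Aq : ℝ) (hm : m = 2 / (1 - q) - n)
    (hβ : β = 1 / (2 * q - n * (1 - q)))
    (hA : Aq = Real.Gamma (1 / (1 - q)) * (β * (1 - q)) ^ ((n : ℝ) / 2) /
        (Real.Gamma (1 / (1 - q) - n / 2) * Real.pi ^ ((n : ℝ) / 2) * Real.sqrt C.det))
    -- the dual parameters
    (qs : ℝ) (hqs : 1 / (qs - 1) = 1 / (1 - q) - n / 2 - 1)
    (Cs : Matrix (Fin n) (Fin n) ℝ) (hCs : Cs = ((m - 2) / (m + n)) • C)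
    (βs As : ℝ) (hβs : βs = 1 / (2 * qs - n * (1 - qs)))
    (hAs : As = Real.Gamma (qs / (qs - 1) + n / 2) * (βs * (qs - 1)) ^ ((n : ℝ) / 2) /
        (Real.Gamma (qs / (qs - 1)) * Real.pi ^ ((n : ℝ) / 2) * Real.sqrt Cs.det))
    -- the law of `X`
    (μX : Measure (Fin n → ℝ))
    (hμX : μX = (volume : Measure (Fin n → ℝ)).withDensity fun x =>
        ENNReal.ofReal (Aq * (1 - β * (q - 1) * (x ⬝ᵥ C⁻¹.mulVec x)) ^ (1 / (q - 1)))) :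
    μX.map (fun x : Fin n → ℝ => fun i =>
        x i / Real.sqrt (1 + (x ⬝ᵥ C⁻¹.mulVec x) / (m - 2)))
      = (volume : Measure (Fin n → ℝ)).withDensity fun y =>
          ENNReal.ofReal (Set.indicator
            {y : Fin n → ℝ | y ⬝ᵥ Cs⁻¹.mulVec y ≤ 1 / (βs * (qs - 1))}
            (fun y => As * (1 - βs * (qs - 1) * (y ⬝ᵥ Cs⁻¹.mulVec y)) ^ (1 / (qs - 1))) y) := by
  have hd : 0 < 1 - q := by linarith
  have hn2 : (0:ℝ) < (n:ℝ) + 2 := by positivity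
  have hq3 : (n:ℝ) < q * (n + 2) := (div_lt_iff₀ hn2).1 hq1
  have hm2 : 0 < m - 2 := by
    have : m - 2 = (2 * q - n * (1 - q)) / (1 - q) := by rw [hm]; field_simp; ring
    rw [this]
    apply div_pos _ hd
    nlinarith
  have hmn : 0 < m + n := by linarith [(Nat.cast_nonneg n : (0:ℝ) ≤ n)]
  have hp : 1 / (1 - q) = (m + n) / 2 := by rw [hm]; field_simp; ring
  have hb : β * (1 - q) = 1 / (m - 2) := by
    have : m - 2 = (2 * q - n * (1 - q)) / (1 - q) := by rw [hm]; field_simp; ring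
    rw [this, hβ, one_div_div]; ring
  have hs : 1 / (qs - 1) = (m - 2) / 2 := by rw [hqs, hp]; ring
  have hqs1 : qs - 1 = 2 / (m - 2) := by
    rw [← one_div_one_div (qs - 1), hs, one_div_div]
  have hqs2 : qs = m / (m - 2) := by
    have : qs = 2 / (m - 2) + 1 := by linarith
    rw [this]; field_simp; ring
  have hbs : βs * (qs - 1) = 1 / (m + n) := by
    have h1 : 2 * qs - n * (1 - qs) = 2 * (m + n) / (m - 2) := by
      have : 2 * qs - n * (1 - qs) = 2 * qs + n * (qs - 1) := by ring
      rw [this, hqs1, hqs2]; field_simp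
    rw [hβs, h1, hqs1]; field_simp
  have hqq : qs / (qs - 1) = m / 2 := by
    rw [hqs1, hqs2]; field_simp
  have hdetC : 0 < C.det := hC.det_pos
  have hCsinv : Cs⁻¹ = ((m + n) / (m - 2)) • C⁻¹ := by
    rw [hCs]
    apply Matrix.inv_eq_left_inv
    rw [Matrix.smul_mul, Matrix.mul_smul, smul_smul, Matrix.nonsing_inv_mul _ hdetC.ne'.isUnit]
    rw [show (m + n) / (m - 2) * ((m - 2) / (m + n)) = 1 by field_simp, one_smul]
  have hAA : As = Aq := by
    rw [hAs, hA, hqq, hbs, hb, hp, hCs, Matrix.det_smul, Fintype.card_fin,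
      Real.sqrt_mul (by positivity)]
    have e1 : √(((m - 2) / (m + n)) ^ n) = ((m - 2) / (m + n)) ^ ((n:ℝ) / 2) := by
      rw [Real.sqrt_eq_rpow, ← Real.rpow_natCast, ← Real.rpow_mul (by positivity)]
      congr 1; ring
    have e2 : (1 / (m + n)) ^ ((n:ℝ) / 2)
        = (1 / (m - 2)) ^ ((n:ℝ) / 2) * ((m - 2) / (m + n)) ^ ((n:ℝ) / 2) := by
      rw [← Real.mul_rpow (by positivity) (by positivity)]
      congr 1; field_simp
    have e3 : 0 < ((m - 2) / (m + n)) ^ ((n:ℝ) / 2) := by positivity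
    rw [e1, e2, show m / 2 + (n:ℝ) / 2 = (m + n) / 2 by ring,
      show (m + n) / 2 - (n:ℝ) / 2 = m / 2 by ring]
    field_simp
  have hQ0 : ∀ x : Fin n → ℝ, 0 ≤ x ⬝ᵥ C⁻¹.mulVec x := fun x => by
    simpa using hC.inv.posSemidef.dotProduct_mulVec_nonneg x
  have hcore := tsallis_core (fun x : Fin n → ℝ => x ⬝ᵥ C⁻¹.mulVec x)
    (by unfold Matrix.mulVec dotProduct; fun_prop)
    (fun t x => by
      simp only [Matrix.mulVec_smul, smul_dotProduct, dotProduct_smul, smul_eq_mul]; ring)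
    hQ0 (m - 2) ((m - 2) / 2) ((m + n) / 2) Aq hm2 (by positivity) (by ring)
  have hf : (fun x : Fin n → ℝ => fun i =>
        x i / Real.sqrt (1 + (x ⬝ᵥ C⁻¹.mulVec x) / (m - 2)))
      = fun x : Fin n → ℝ => (√(1 + (x ⬝ᵥ C⁻¹.mulVec x) / (m - 2)))⁻¹ • x := by
    funext x i
    simp only [Pi.smul_apply, smul_eq_mul]
    ring
  have hb' : β * (q - 1) = - (1 / (m - 2)) := by rw [← hb]; ring
  have hp' : 1 / (q - 1) = - ((m + n) / 2) := by
    rw [← hp, ← neg_sub 1 q, one_div_neg_eq_neg_one_div]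
  have hQs : ∀ y : Fin n → ℝ, y ⬝ᵥ Cs⁻¹.mulVec y
      = (m + n) / (m - 2) * (y ⬝ᵥ C⁻¹.mulVec y) := fun y => by
    rw [hCsinv, Matrix.smul_mulVec, dotProduct_smul, smul_eq_mul]
  have hset : ∀ y : Fin n → ℝ, (m + n) / (m - 2) * (y ⬝ᵥ C⁻¹.mulVec y) ≤ 1 / (1 / (m + n))
      ↔ y ⬝ᵥ C⁻¹.mulVec y ≤ m - 2 := fun y => by
    rw [one_div_one_div, div_mul_eq_mul_div, div_le_iff₀ hm2, mul_le_mul_iff_right₀ hmn]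
  have hval : ∀ y : Fin n → ℝ, 1 - 1 / (m + n) * ((m + n) / (m - 2) * (y ⬝ᵥ C⁻¹.mulVec y))
      = 1 - (y ⬝ᵥ C⁻¹.mulVec y) / (m - 2) := fun y => by
    field_simp
  have hvx : ∀ x : Fin n → ℝ, 1 - -(1 / (m - 2)) * (x ⬝ᵥ C⁻¹.mulVec x)
      = 1 + (x ⬝ᵥ C⁻¹.mulVec x) / (m - 2) := fun x => by ring
  rw [hμX, hf, hb', hp', hAA, hbs, hs]
  simp only [hQs, hset, hval, hvx]
  exact hcore
end

section
/- Let q* > 1, m = 2q*/(q*-1), and C symmetric positive definite. Then Y = √(m+n) C^{1/2} N / √(a + NᵀN), where N is an n-variate standard Gaussian and a is an independent chi-square variable with m degrees of freedom, is distributed according to the n-variate Tsallis density with parameter q* and covariance matrix C. -/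
open MeasureTheory Real Matrix

lemma aux_scale {n : ℕ} (M : Matrix (Fin n) (Fin n) ℝ) (hM : M.det ≠ 0)
    (F : (Fin n → ℝ) → ENNReal) (hF : Measurable F) :
    ∫⁻ x, F (M.mulVec x) = ENNReal.ofReal |M.det⁻¹| * ∫⁻ y, F y := by
  have h := Real.map_matrix_volume_pi_eq_smul_volume_pi hM
  have hm : Measurable (toLin' M) := (LinearMap.continuous_of_finiteDimensional _).measurable
  have h2 : ∫⁻ y, F y ∂(Measure.map (toLin' M) volume) = ∫⁻ x, F (M.mulVec x) := by
    rw [lintegral_map hF hm]; simp [toLin'_apply]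
  rw [← h2, h, lintegral_smul_measure, smul_eq_mul]

lemma aux_gamma (p : ℝ) (hp : 0 < p) :
    ∫⁻ s in Set.Ioi (0:ℝ), ENNReal.ofReal (s ^ (p - 1) * Real.exp (-s / 2))
      = ENNReal.ofReal (2 ^ p * Real.Gamma p) := by
  have h := Real.integral_rpow_mul_exp_neg_mul_Ioi hp (show (0:ℝ) < 1/2 by norm_num)
  have hi := integrableOn_rpow_mul_exp_neg_mul_rpow (p := 1) (s := p - 1) (b := 1/2)
    (by linarith) one_pos (by norm_num)
  have e1 : ∀ s : ℝ, s ^ (p - 1) * Real.exp (-(1/2 * s)) = s ^ (p - 1) * Real.exp (-s / 2) := by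
    intro s; congr 2; ring
  have e2 : ∀ s : ℝ, s ^ (p - 1) * Real.exp (-(1/2) * s ^ (1:ℝ))
      = s ^ (p - 1) * Real.exp (-s / 2) := by
    intro s; rw [Real.rpow_one]; congr 2; ring
  simp_rw [e1] at h
  simp_rw [e2] at hi
  rw [← ofReal_integral_eq_lintegral_ofReal hi, h]
  · norm_num
  · filter_upwards [ae_restrict_mem measurableSet_Ioi] with s hs
    have : (0:ℝ) < s := hs
    positivity

lemma aux_main {n : ℕ} (R : Matrix (Fin n) (Fin n) ℝ) (hR : 0 < R.det) (c : ℝ) (hc : 0 < c)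
    (fN : (Fin n → ℝ) → ENNReal) (hfN : Measurable fN)
    (fa : ℝ → ENNReal) (hfa : Measurable fa) (hfa0 : ∀ t ≤ 0, fa t = 0)
    (g : (Fin n → ℝ) → ENNReal) (hg : Measurable g) :
    ∫⁻ x, ∫⁻ t, fN x * fa t *
        g (fun i => c * R.mulVec x i / Real.sqrt (t + ∑ j, x j ^ 2))
      = ∫⁻ y, (∫⁻ s in Set.Ioi (0:ℝ), ENNReal.ofReal ((Real.sqrt s / c) ^ n / R.det) *
          fN ((Real.sqrt s / c) • R⁻¹.mulVec y) *
          fa (s - ∑ j, ((Real.sqrt s / c) • R⁻¹.mulVec y) j ^ 2)) * g y := by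
  have hmv : ∀ A : Matrix (Fin n) (Fin n) ℝ, Measurable (fun x => A.mulVec x) := fun A =>
    (Continuous.matrix_mulVec continuous_const continuous_id).measurable
  have hRm : Measurable (fun x => R.mulVec x) := hmv R
  have hRi : Measurable (fun x => R⁻¹.mulVec x) := hmv _
  have step1 : ∀ x : Fin n → ℝ, ∫⁻ t, fN x * fa t *
        g (fun i => c * R.mulVec x i / Real.sqrt (t + ∑ j, x j ^ 2))
      = ∫⁻ s, fN x * fa (s - ∑ j, x j ^ 2) *
        g (fun i => c * R.mulVec x i / Real.sqrt s) := by
    intro x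
    rw [← lintegral_sub_right_eq_self _ (∑ j, x j ^ 2)]
    simp
  simp_rw [step1]
  have hmeas1 : Measurable (fun z : (Fin n → ℝ) × ℝ => fN z.1 * fa (z.2 - ∑ j, z.1 j ^ 2) *
        g (fun i => c * R.mulVec z.1 i / Real.sqrt z.2)) := by
    refine (Measurable.mul (by fun_prop) (hfa.comp (by fun_prop))).mul (hg.comp ?_)
    refine measurable_pi_lambda _ fun i => ?_
    have : Measurable fun z : (Fin n → ℝ) × ℝ => R.mulVec z.1 i :=
      (measurable_pi_apply i).comp (hRm.comp measurable_fst)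
    fun_prop
  rw [lintegral_lintegral_swap hmeas1.aemeasurable]
  have hzero : ∀ s ∉ Set.Ioi (0:ℝ), ∫⁻ x : Fin n → ℝ, fN x * fa (s - ∑ j, x j ^ 2) *
        g (fun i => c * R.mulVec x i / Real.sqrt s) = 0 := by
    intro s hs
    have hs : s ≤ 0 := by simpa using hs
    have : ∀ x : Fin n → ℝ, fa (s - ∑ j, x j ^ 2) = 0 := fun x => hfa0 _ (by
      have : 0 ≤ ∑ j, x j ^ 2 := Finset.sum_nonneg fun j _ => sq_nonneg _
      linarith)
    simp [this]
  rw [← setLIntegral_eq_of_support_subset (s := Set.Ioi (0:ℝ)) (by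
    intro s hs; by_contra h; exact hs (hzero s h))]
  have step2 : ∀ s ∈ Set.Ioi (0:ℝ), ∫⁻ x : Fin n → ℝ, fN x * fa (s - ∑ j, x j ^ 2) *
        g (fun i => c * R.mulVec x i / Real.sqrt s)
      = ∫⁻ y, (ENNReal.ofReal ((Real.sqrt s / c) ^ n / R.det) *
          fN ((Real.sqrt s / c) • R⁻¹.mulVec y) *
          fa (s - ∑ j, ((Real.sqrt s / c) • R⁻¹.mulVec y) j ^ 2)) * g y := by
    intro s hs
    have hs : 0 < s := hs
    have hq : 0 < Real.sqrt s := Real.sqrt_pos.2 hs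
    have hdet : ((c / Real.sqrt s) • R).det = (c / Real.sqrt s) ^ n * R.det := by
      rw [Matrix.det_smul]; simp
    have hdpos : 0 < ((c / Real.sqrt s) • R).det := by rw [hdet]; positivity
    have hmF : Measurable (fun y => fN ((Real.sqrt s / c) • R⁻¹.mulVec y) *
          fa (s - ∑ j, ((Real.sqrt s / c) • R⁻¹.mulVec y) j ^ 2) * g y) := by
      have : Measurable fun y => (Real.sqrt s / c) • R⁻¹.mulVec y :=
        Measurable.smul (f := fun _ => Real.sqrt s / c) measurable_const hRi
      refine (Measurable.mul (hfN.comp this) (hfa.comp ?_)).mul hg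
      have h2 : Measurable fun x : Fin n → ℝ => s - ∑ j, x j ^ 2 := by fun_prop
      exact h2.comp this
    have := aux_scale ((c / Real.sqrt s) • R) hdpos.ne' _ hmF
    have hinv : ∀ x, (Real.sqrt s / c) • R⁻¹.mulVec (((c / Real.sqrt s) • R).mulVec x) = x := by
      intro x
      rw [Matrix.smul_mulVec, Matrix.mulVec_smul, smul_smul, Matrix.mulVec_mulVec,
        Matrix.nonsing_inv_mul _ (isUnit_iff_ne_zero.2 hR.ne'), Matrix.one_mulVec]
      rw [show Real.sqrt s / c * (c / Real.sqrt s) = 1 by field_simp, one_smul]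
    simp_rw [hinv] at this
    have hg' : ∀ x, (fun i => c * R.mulVec x i / Real.sqrt s) = ((c / Real.sqrt s) • R).mulVec x := by
      intro x; ext i; rw [Matrix.smul_mulVec]; simp; ring
    simp_rw [hg', this, mul_assoc]
    rw [lintegral_const_mul]
    · congr 2
      rw [abs_of_pos (inv_pos.2 hdpos), hdet, mul_inv, ← inv_pow, inv_div, div_eq_mul_inv ((Real.sqrt s / c) ^ n)]
    · simpa only [mul_assoc] using hmF
  rw [setLIntegral_congr_fun measurableSet_Ioi step2]
  have hmeas2 : Measurable (fun z : ℝ × (Fin n → ℝ) =>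
      (ENNReal.ofReal ((Real.sqrt z.1 / c) ^ n / R.det) *
          fN ((Real.sqrt z.1 / c) • R⁻¹.mulVec z.2) *
          fa (z.1 - ∑ j, ((Real.sqrt z.1 / c) • R⁻¹.mulVec z.2) j ^ 2))) := by
    have h1 : Measurable fun z : ℝ × (Fin n → ℝ) => (Real.sqrt z.1 / c) • R⁻¹.mulVec z.2 :=
      Measurable.smul ((Real.continuous_sqrt.measurable.comp measurable_fst).div_const c)
        (hRi.comp measurable_snd)
    have h2 : Measurable fun x : ℝ × (Fin n → ℝ) => x.1 - ∑ j, x.2 j ^ 2 := by fun_prop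
    refine Measurable.mul (Measurable.mul (by fun_prop) (hfN.comp h1)) (hfa.comp ?_)
    exact h2.comp (measurable_fst.prodMk h1)
  have hfin : ∀ H : ℝ × (Fin n → ℝ) → ENNReal, Measurable H →
      ∫⁻ s in Set.Ioi (0:ℝ), ∫⁻ y, H (s, y) * g y
        = ∫⁻ y, (∫⁻ s in Set.Ioi (0:ℝ), H (s, y)) * g y := by
    intro H hH
    have h3 : Measurable fun z : ℝ × (Fin n → ℝ) => H z * g z.2 := by fun_prop
    rw [lintegral_lintegral_swap (f := fun s y => H (s, y) * g y) h3.aemeasurable]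
    refine lintegral_congr fun y => ?_
    rw [lintegral_mul_const]
    fun_prop
  exact hfin _ hmeas2

lemma aux_inner (n : ℕ) (k K d Q : ℝ) (hk : 1 < k) (hK : 0 < K) (hd : 0 < d) :
    ∫⁻ s in Set.Ioi (0:ℝ), ENNReal.ofReal ((Real.sqrt s / Real.sqrt K) ^ n / d) *
      ENNReal.ofReal ((2 * Real.pi) ^ (-(n : ℝ) / 2) * Real.exp (-(s / K * Q) / 2)) *
      ENNReal.ofReal (Set.indicator (Set.Ioi (0 : ℝ))
          (fun t => t ^ (k - 1) * Real.exp (-t / 2) /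
            (2 ^ k * Real.Gamma k)) (s - s / K * Q))
     = ENNReal.ofReal (if Q ≤ K then Real.Gamma (k + n / 2) * (1 / K) ^ ((n : ℝ) / 2) /
        (Real.Gamma k * Real.pi ^ ((n : ℝ) / 2) * d) * (1 - 1 / K * Q) ^ (k - 1) else 0) := by
  have hG : 0 < Real.Gamma k := Real.Gamma_pos_of_pos (by linarith)
  have hp : 0 < k + n / 2 := by positivity
  have key : ∀ s : ℝ, s - s / K * Q = s * (1 - 1 / K * Q) := by intro s; field_simp
  by_cases h : Q < K
  · have hw : 0 < 1 - 1 / K * Q := by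
      rw [sub_pos, one_div, inv_mul_lt_iff₀ hK]; simpa
    rw [if_pos h.le]
    set w := 1 - 1 / K * Q with hwdef
    rw [setLIntegral_congr_fun (g := fun s => ENNReal.ofReal
        (K ^ (-(n:ℝ)/2) / d * (2 * Real.pi) ^ (-(n : ℝ) / 2) * w ^ (k - 1) / (2 ^ k * Real.Gamma k)) *
        ENNReal.ofReal (s ^ (k + n / 2 - 1) * Real.exp (-s / 2))) measurableSet_Ioi]
    · rw [lintegral_const_mul _ (by fun_prop), aux_gamma _ hp, ← ENNReal.ofReal_mul (by positivity)]
      congr 1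
      rw [Real.rpow_add two_pos, Real.mul_rpow (by norm_num) Real.pi_pos.le, neg_div,
        Real.rpow_neg two_pos.le, Real.rpow_neg Real.pi_pos.le, Real.rpow_neg hK.le, one_div,
        Real.inv_rpow hK.le]
      field_simp
    · intro s hs
      have hs : 0 < s := hs
      simp only
      rw [key, Set.indicator_of_mem (show s * w ∈ Set.Ioi (0:ℝ) from mul_pos hs hw),
        ← ENNReal.ofReal_mul (by positivity), ← ENNReal.ofReal_mul (by positivity),
        ← ENNReal.ofReal_mul (by positivity)]
      congr 1
      have e1 : (Real.sqrt s / Real.sqrt K) ^ n = s ^ ((n:ℝ)/2) * K ^ (-(n:ℝ)/2) := by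
        rw [div_pow, Real.sqrt_eq_rpow, Real.sqrt_eq_rpow, ← Real.rpow_natCast, ← Real.rpow_natCast,
          ← Real.rpow_mul hs.le, ← Real.rpow_mul hK.le, neg_div, Real.rpow_neg hK.le, div_eq_mul_inv]
        congr 2 <;> ring_nf
      have e2 : Real.exp (-s / 2) = Real.exp (-(s / K * Q) / 2) * Real.exp (-(s * w) / 2) := by
        rw [← Real.exp_add, ← key]; congr 1; ring
      have e3 : s ^ (k + n / 2 - 1) = s ^ (k - 1) * s ^ ((n:ℝ)/2) := by
        rw [← Real.rpow_add hs]; congr 1; ring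
      rw [e1, e2, e3, Real.mul_rpow hs.le hw.le]
      ring
  · have hR0 : (if Q ≤ K then Real.Gamma (k + n / 2) * (1 / K) ^ ((n : ℝ) / 2) /
        (Real.Gamma k * Real.pi ^ ((n : ℝ) / 2) * d) * (1 - 1 / K * Q) ^ (k - 1) else 0) = 0 := by
      split_ifs with h2
      · have : Q = K := le_antisymm h2 (not_lt.1 h)
        rw [this, one_div, inv_mul_cancel₀ hK.ne', sub_self, Real.zero_rpow (by linarith), mul_zero]
      · rfl
    rw [hR0, setLIntegral_congr_fun (g := fun _ => 0) measurableSet_Ioi]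
    · simp
    · intro s hs
      have hs : 0 < s := hs
      have : s * (1 - 1 / K * Q) ≤ 0 := by
        apply mul_nonpos_of_nonneg_of_nonpos hs.le
        rw [sub_nonpos, one_div, le_inv_mul_iff₀ hK]; simpa using h
      simp only
      rw [key, Set.indicator_of_notMem (by simpa using this)]
      simp

/-- For `q* > 1`, `m = 2q*/(q*-1)`: `Y = √(m+n) C^{1/2} N / √(a + NᵀN)`, with `N`
standard Gaussian and `a` an independent chi-square variable with `m` degrees of
freedom, has the Tsallis density with parameter `q*` and covariance `C`. -/
theorem tsallis_q_gt_one_stochastic_representation (n : ℕ) (hn : 1 ≤ n) (qs : ℝ)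
    (hqs : 1 < qs)
    (C R : Matrix (Fin n) (Fin n) ℝ) (hCsymm : C.IsSymm) (hC : C.PosDef)
    (hRsymm : R.IsSymm) (hR : R.PosDef) (hRC : R * R = C)
    (m β Aq : ℝ) (hm : m = 2 * qs / (qs - 1))
    (hβ : β = 1 / (2 * qs - n * (1 - qs)))
    (hA : Aq = Real.Gamma (qs / (qs - 1) + n / 2) * (β * (qs - 1)) ^ ((n : ℝ) / 2) /
        (Real.Gamma (qs / (qs - 1)) * Real.pi ^ ((n : ℝ) / 2) * Real.sqrt C.det))
    (μN : Measure (Fin n → ℝ))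
    (hμN : μN = (volume : Measure (Fin n → ℝ)).withDensity fun x =>
        ENNReal.ofReal ((2 * Real.pi) ^ (-(n : ℝ) / 2) * Real.exp (-(∑ i, x i ^ 2) / 2)))
    (μa : Measure ℝ)
    (hμa : μa = (volume : Measure ℝ).withDensity fun t =>
        ENNReal.ofReal (Set.indicator (Set.Ioi (0 : ℝ))
          (fun t => t ^ (m / 2 - 1) * Real.exp (-t / 2) /
            (2 ^ (m / 2) * Real.Gamma (m / 2))) t)) :
    (μN.prod μa).map
        (fun p : (Fin n → ℝ) × ℝ => fun i =>
          Real.sqrt (m + n) * R.mulVec p.1 i / Real.sqrt (p.2 + ∑ j, p.1 j ^ 2))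
      = (volume : Measure (Fin n → ℝ)).withDensity fun y =>
          ENNReal.ofReal (Set.indicator
            {y : Fin n → ℝ | y ⬝ᵥ C⁻¹.mulVec y ≤ 1 / (β * (qs - 1))}
            (fun y => Aq * (1 - β * (qs - 1) * (y ⬝ᵥ C⁻¹.mulVec y)) ^ (1 / (qs - 1))) y) := by
  have hq : 0 < qs - 1 := by linarith
  have hk : 1 < m / 2 := by
    rw [hm, lt_div_iff₀ two_pos, lt_div_iff₀ hq]; linarith
  have hk1 : m / 2 - 1 = 1 / (qs - 1) := by rw [hm]; field_simp; ring
  have hk2 : m / 2 = qs / (qs - 1) := by rw [hm]; field_simp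
  have hK : 0 < m + n := by
    have : (0:ℝ) ≤ n := n.cast_nonneg
    linarith
  have hβK : β * (qs - 1) = 1 / (m + n) := by
    have : 2 * qs - n * (1 - qs) = (m + n) * (qs - 1) := by rw [hm]; field_simp; ring
    rw [hβ, this]; field_simp
  have hRd : 0 < R.det := hR.det_pos
  have hCd : Real.sqrt C.det = R.det := by
    rw [← hRC, Matrix.det_mul, Real.sqrt_mul_self hRd.le]
  have hRinv : R⁻¹ᵀ = R⁻¹ := by rw [Matrix.transpose_nonsing_inv, hRsymm.eq]
  have hQ : ∀ y : Fin n → ℝ, ∑ j, R⁻¹.mulVec y j ^ 2 = y ⬝ᵥ C⁻¹.mulVec y := by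
    intro y
    rw [← hRC, Matrix.mul_inv_rev, ← Matrix.mulVec_mulVec, Matrix.dotProduct_mulVec,
      ← Matrix.mulVec_transpose, hRinv]
    simp [dotProduct, sq]
  have hmv : ∀ A : Matrix (Fin n) (Fin n) ℝ, Measurable (fun x => A.mulVec x) := fun A =>
    (Continuous.matrix_mulVec continuous_const continuous_id).measurable
  set fN : (Fin n → ℝ) → ENNReal := fun x =>
    ENNReal.ofReal ((2 * Real.pi) ^ (-(n : ℝ) / 2) * Real.exp (-(∑ i, x i ^ 2) / 2)) with hfN
  set fa : ℝ → ENNReal := fun t => ENNReal.ofReal (Set.indicator (Set.Ioi (0 : ℝ))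
          (fun t => t ^ (m / 2 - 1) * Real.exp (-t / 2) /
            (2 ^ (m / 2) * Real.Gamma (m / 2))) t) with hfa
  have mfN : Measurable fN := by fun_prop
  have mfa : Measurable fa :=
    ENNReal.measurable_ofReal.comp (Measurable.indicator (by fun_prop) measurableSet_Ioi)
  have hfa0 : ∀ t ≤ 0, fa t = 0 := by
    intro t ht
    simp only [hfa]
    rw [Set.indicator_of_notMem (by simpa using ht)]; simp
  have mT : Measurable (fun p : (Fin n → ℝ) × ℝ => fun i =>
          Real.sqrt (m + n) * R.mulVec p.1 i / Real.sqrt (p.2 + ∑ j, p.1 j ^ 2)) := by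
    refine measurable_pi_lambda _ fun i => ?_
    have : Measurable fun z : (Fin n → ℝ) × ℝ => R.mulVec z.1 i :=
      (measurable_pi_apply i).comp ((hmv R).comp measurable_fst)
    fun_prop
  have mQ : Measurable fun y : Fin n → ℝ => y ⬝ᵥ C⁻¹.mulVec y := by
    simp_rw [← hQ]
    have h2 : Measurable fun x : Fin n → ℝ => ∑ j, x j ^ 2 := by fun_prop
    exact h2.comp (hmv R⁻¹)
  have mD : Measurable fun y : Fin n → ℝ => ENNReal.ofReal (Set.indicator
            {y : Fin n → ℝ | y ⬝ᵥ C⁻¹.mulVec y ≤ 1 / (β * (qs - 1))}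
            (fun y => Aq * (1 - β * (qs - 1) * (y ⬝ᵥ C⁻¹.mulVec y)) ^ (1 / (qs - 1))) y) := by
    refine ENNReal.measurable_ofReal.comp (Measurable.indicator ?_
      (measurableSet_le mQ measurable_const))
    exact (((mQ.const_mul _).const_sub _).pow_const _).const_mul _
  have mgT : ∀ g : (Fin n → ℝ) → ENNReal, Measurable g → Measurable (fun p : (Fin n → ℝ) × ℝ =>
      g (fun i => Real.sqrt (m + n) * R.mulVec p.1 i / Real.sqrt (p.2 + ∑ j, p.1 j ^ 2))) :=
    fun g hg => hg.comp mT
  refine Measure.ext_of_lintegral _ fun g hg => ?_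
  rw [lintegral_map hg mT, hμN, hμa, prod_withDensity mfN mfa,
    lintegral_withDensity_eq_lintegral_mul _ (by fun_prop) (mgT g hg),
    lintegral_withDensity_eq_lintegral_mul _ mD hg]
  rw [lintegral_prod _ (by
    exact (Measurable.mul (by fun_prop) (mgT g hg)).aemeasurable)]
  have hmain := aux_main R hRd (Real.sqrt (m + n)) (Real.sqrt_pos.2 hK) fN mfN fa mfa hfa0 g hg
  refine hmain.trans (lintegral_congr fun y => ?_)
  simp only [Pi.mul_apply]
  congr 1
  have hsum : ∀ s ∈ Set.Ioi (0:ℝ),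
      ∑ j, ((Real.sqrt s / Real.sqrt (m + n)) • R⁻¹.mulVec y) j ^ 2
        = s / (m + n) * (y ⬝ᵥ C⁻¹.mulVec y) := by
    intro s hs
    have hs : 0 < s := hs
    simp only [Pi.smul_apply, smul_eq_mul, mul_pow, ← Finset.mul_sum, hQ, div_pow,
      Real.sq_sqrt hs.le, Real.sq_sqrt hK.le]
  have hin := aux_inner n (m / 2) (m + n) R.det (y ⬝ᵥ C⁻¹.mulVec y) hk hK hRd
  rw [hA, hβK, hCd, ← hk1, ← hk2]
  simp only [Set.indicator_apply, Set.mem_setOf_eq, one_div_one_div] at hin ⊢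
  rw [← hin]
  refine setLIntegral_congr_fun measurableSet_Ioi fun s hs => ?_
  simp only [hfN, hfa]
  rw [hsum s hs]
  simp only [Set.indicator_apply]
end

section
/- (Poincaré's Observation) Fix n and real numbers a_i < b_i, i = 1,...,n. If X^{(p)} is uniformly distributed on the sphere of radius √p in ℝ^p, then as p → ∞, the probability P(a_i ≤ X_i^{(p)} ≤ b_i for all i = 1,...,n) converges to ∏_{i=1}^n ∫_{a_i}^{b_i} (2π)^{-1/2} e^{-x²/2} dx. -/
open MeasureTheory Real Filter
open ProbabilityTheory in
lemma gauss_norm_sq (p : ℕ) :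
    Integrable (fun x : EuclideanSpace ℝ (Fin p) => (‖x‖ ^ 2 - p) ^ 2) (stdGaussian (EuclideanSpace ℝ (Fin p))) ∧
    ∫ x, (‖x‖ ^ 2 - p) ^ 2 ∂(stdGaussian (EuclideanSpace ℝ (Fin p))) =
      p * variance (fun x : ℝ => x ^ 2) (gaussianReal 0 1) := by
  have hL : MemLp (fun x : ℝ => x ^ 2) 2 (gaussianReal 0 1) := by
    have h4 : MemLp (id : ℝ → ℝ) 4 (gaussianReal 0 1) := memLp_id_gaussianReal' 4 (by simp)
    have := MemLp.mul (p := 4) (q := 4) (r := 2) h4 h4 (hpqr := ⟨by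
      rw [← two_mul, show (4 : ENNReal) = 2 * 2 by norm_num, ENNReal.mul_inv (by simp) (by simp), ← mul_assoc,
        ENNReal.mul_inv_cancel (by simp) (by simp), one_mul]⟩)
    refine this.congr_norm (by fun_prop) ?_
    filter_upwards with x
    simp [pow_two]
  have hm : ∫ x : ℝ, x ^ 2 ∂(gaussianReal 0 1) = 1 := by
    have h1 := variance_id_gaussianReal (μ := 0) (v := 1)
    rw [variance_eq_integral (by fun_prop)] at h1
    simpa using h1
  have hLi (i : Fin p) : MemLp (fun x : Fin p → ℝ => (x i) ^ 2) 2 (Measure.pi (fun _ : Fin p => gaussianReal 0 1)) :=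
    hL.comp_measurePreserving (measurePreserving_eval _ i)
  have hmi (i : Fin p) : ∫ x : Fin p → ℝ, (x i) ^ 2 ∂(Measure.pi (fun _ : Fin p => gaussianReal 0 1)) = 1 := by
    rw [← hm]
    exact integral_comp_eval (μ := fun _ : Fin p => gaussianReal 0 1) (i := i) (f := fun x : ℝ => x ^ 2) (by fun_prop)
  have hS : MemLp (∑ i, fun x : Fin p → ℝ => (x i) ^ 2) 2 (Measure.pi (fun _ : Fin p => gaussianReal 0 1)) := 
    memLp_finsetSum' _ fun i _ => hLi i
  have hmean : ∫ x, (∑ i, fun x : Fin p → ℝ => (x i) ^ 2) x ∂(Measure.pi (fun _ : Fin p => gaussianReal 0 1)) = p := by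
    simp only [Finset.sum_apply]
    rw [integral_finsetSum _ fun i _ => (hLi i).integrable (by norm_num)]
    simp [hmi]
  have hfe : (fun x : Fin p → ℝ => (‖(WithLp.toLp 2 x : EuclideanSpace ℝ (Fin p))‖ ^ 2 - p) ^ 2) =
      fun x => ((∑ i, fun x : Fin p → ℝ => (x i) ^ 2) x - p) ^ 2 := by
    ext x
    rw [EuclideanSpace.norm_sq_eq]; simp
  rw [← map_pi_eq_stdGaussian]
  constructor
  · rw [integrable_map_measure (by fun_prop) (by fun_prop)]
    change Integrable (fun x : Fin p → ℝ => (‖(WithLp.toLp 2 x : EuclideanSpace ℝ (Fin p))‖ ^ 2 - p) ^ 2) _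
    rw [hfe]
    exact (hS.sub (memLp_const (p : ℝ))).integrable_sq
  · rw [integral_map (by fun_prop) (by fun_prop)]
    rw [hfe]
    have := variance_sum_pi (μ := fun _ : Fin p => gaussianReal 0 1) (X := fun _ x => x ^ 2) (fun _ => hL)
    rw [variance_eq_integral hS.1.aemeasurable, hmean] at this
    rw [this]; simp

section
variable {E : Type*} [NormedAddCommGroup E] [InnerProductSpace ℝ E] [FiniteDimensional ℝ E]
  [MeasurableSpace E] [BorelSpace E]

lemma charFun_norm_eq (μ : Measure E) (hinv : ∀ T : E ≃ₗᵢ[ℝ] E, μ.map T = μ) (s t : E)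
    (h : ‖s‖ = ‖t‖) : charFun μ s = charFun μ t := by
  set T := Submodule.reflection (ℝ ∙ (s - t))ᗮ with hT
  have hTs : T s = t := Submodule.reflection_sub h
  rw [← hTs, charFun_apply, charFun_apply]
  conv_rhs => rw [← hinv T]
  rw [integral_map (by fun_prop) (by fun_prop)]
  simp

lemma sq_norm_eq (μ : Measure E) (hinv : ∀ T : E ≃ₗᵢ[ℝ] E, μ.map T = μ) (s t : E)
    (h : ‖s‖ = ‖t‖) : ∫ x, (inner ℝ x s) ^ 2 ∂μ = ∫ x, (inner ℝ x t) ^ 2 ∂μ := by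
  set T := Submodule.reflection (ℝ ∙ (s - t))ᗮ with hT
  have hTs : T s = t := Submodule.reflection_sub h
  rw [← hTs]
  conv_rhs => rw [← hinv T]
  rw [integral_map (by fun_prop) (by fun_prop)]
  simp

end

lemma second_moment (p : ℕ) (hp : 0 < p) (μ : Measure (EuclideanSpace ℝ (Fin p))) [IsProbabilityMeasure μ]
    (hsupp : ∀ᵐ x ∂μ, ‖x‖ = √p) (hinv : ∀ T : EuclideanSpace ℝ (Fin p) ≃ₗᵢ[ℝ] EuclideanSpace ℝ (Fin p), μ.map T = μ)
    (t : EuclideanSpace ℝ (Fin p)) :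
    Integrable (fun x => (inner ℝ x t) ^ 2) μ ∧ ∫ x, (inner ℝ x t) ^ 2 ∂μ = ‖t‖ ^ 2 := by
  have hint (t : EuclideanSpace ℝ (Fin p)) : Integrable (fun x => (inner ℝ x t) ^ 2) μ := by
    refine Integrable.of_bound (by fun_prop) ((√p * ‖t‖) ^ 2) ?_
    filter_upwards [hsupp] with x hx
    rw [norm_pow, ← hx]
    gcongr
    exact norm_inner_le_norm x t
  refine ⟨hint t, ?_⟩
  have h1 (i : Fin p) : ∫ x, (inner ℝ x t) ^ 2 ∂μ = ∫ x, (inner ℝ x (EuclideanSpace.single i (‖t‖))) ^ 2 ∂μ :=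
    sq_norm_eq μ hinv _ _ (by simp)
  have h2 : ∑ i : Fin p, ∫ x, (inner ℝ x (EuclideanSpace.single i (‖t‖))) ^ 2 ∂μ = p * ‖t‖ ^ 2 := by
    rw [← integral_finsetSum _ fun i _ => hint _]
    have : ∫ x, ∑ i : Fin p, (inner ℝ x (EuclideanSpace.single i (‖t‖))) ^ 2 ∂μ = ∫ x, (p * ‖t‖ ^ 2 : ℝ) ∂μ := by
      refine integral_congr_ae ?_
      filter_upwards [hsupp] with x hx
      have : ‖x‖ ^ 2 = p := by rw [hx, Real.sq_sqrt (by positivity)]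
      rw [← this, EuclideanSpace.norm_sq_eq, Finset.sum_mul]
      refine Finset.sum_congr rfl fun i _ => ?_
      simp [EuclideanSpace.inner_single_right]; ring
    rw [this]; simp
  simp_rw [← h1] at h2
  have : (p : ℝ) ≠ 0 := by positivity
  simpa [this] using h2

lemma charFun_scale (p : ℕ) (hp : 0 < p) (μ : Measure (EuclideanSpace ℝ (Fin p))) [IsProbabilityMeasure μ]
    (hsupp : ∀ᵐ x ∂μ, ‖x‖ = √p) (hinv : ∀ T : EuclideanSpace ℝ (Fin p) ≃ₗᵢ[ℝ] EuclideanSpace ℝ (Fin p), μ.map T = μ)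
    (t : EuclideanSpace ℝ (Fin p)) (c : ℝ) :
    ‖charFun μ (c • t) - charFun μ t‖ ≤ |c - 1| * ((1 + ‖t‖ ^ 2) / 2) := by
  obtain ⟨hi, hv⟩ := second_moment p hp μ hsupp hinv t
  have hint (s : EuclideanSpace ℝ (Fin p)) : Integrable (fun x => Complex.exp (inner ℝ x s * Complex.I)) μ := by
    refine Integrable.of_bound (by fun_prop) 1 (ae_of_all _ fun x => ?_)
    rw [Complex.norm_exp_ofReal_mul_I]
  rw [charFun_apply, charFun_apply, ← integral_sub (hint _) (hint _)]
  have : |c - 1| * ((1 + ‖t‖ ^ 2) / 2) = ∫ x, |c - 1| * ((1 + (inner ℝ x t) ^ 2) / 2) ∂μ := by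
    rw [integral_const_mul, integral_div, integral_add (by fun_prop) hi, hv]; simp
  rw [this]
  refine norm_integral_le_of_norm_le ((((integrable_const _).add hi).div_const _).const_mul _) (ae_of_all _ fun x => ?_)
  set y := inner ℝ x t with hy
  have e : Complex.exp ((inner ℝ x (c • t) : ℝ) * Complex.I) - Complex.exp (y * Complex.I) =
      Complex.exp (y * Complex.I) * (Complex.exp (Complex.I * (((c - 1) * y : ℝ))) - 1) := by
    rw [mul_sub, ← Complex.exp_add, real_inner_smul_right, ← hy]
    push_cast; ring_nf
  rw [e, norm_mul, Complex.norm_exp_ofReal_mul_I, one_mul]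
  refine Real.norm_exp_I_mul_ofReal_sub_one_le.trans ?_
  rw [norm_mul, Real.norm_eq_abs, Real.norm_eq_abs]
  gcongr
  nlinarith [sq_nonneg (|y| - 1), sq_abs y]

open ProbabilityTheory in
lemma charFun_avg (p : ℕ) (μ : Measure (EuclideanSpace ℝ (Fin p))) [IsProbabilityMeasure μ]
    (hsupp : ∀ᵐ x ∂μ, ‖x‖ = √p) (s : ℝ) :
    ∫ g, charFun μ (s • g) ∂(stdGaussian (EuclideanSpace ℝ (Fin p))) = Complex.exp (-(s ^ 2 * p) / 2 : ℝ) := by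
  simp_rw [charFun_apply]
  rw [integral_integral_swap]
  · have : ∀ᵐ x ∂μ, ∫ g, Complex.exp ((inner ℝ x (s • g) : ℝ) * Complex.I) ∂(stdGaussian (EuclideanSpace ℝ (Fin p)))
        = Complex.exp (-(s ^ 2 * p) / 2 : ℝ) := by
      filter_upwards [hsupp] with x hx
      have hh (g : EuclideanSpace ℝ (Fin p)) : inner ℝ x (s • g) = inner ℝ g (s • x) := by
        rw [real_inner_smul_right, real_inner_smul_right, real_inner_comm]
      simp_rw [hh]
      rw [← charFun_apply, charFun_stdGaussian, norm_smul, hx]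
      congr 1
      have h : (‖s‖ * √(p : ℝ)) ^ 2 = s ^ 2 * p := by
        rw [mul_pow, Real.sq_sqrt (by positivity), Real.norm_eq_abs, sq_abs]
      rw [← h]; push_cast; rfl
    rw [integral_congr_ae this]; simp
  · refine Integrable.of_bound (by fun_prop) 1 (ae_of_all _ fun x => ?_)
    simp only [Function.uncurry]
    rw [Complex.norm_exp_ofReal_mul_I]

open ProbabilityTheory in
lemma charFun_bound (p : ℕ) (hp : 0 < p) (μ : Measure (EuclideanSpace ℝ (Fin p))) [IsProbabilityMeasure μ]
    (hsupp : ∀ᵐ x ∂μ, ‖x‖ = √p) (hinv : ∀ T : EuclideanSpace ℝ (Fin p) ≃ₗᵢ[ℝ] EuclideanSpace ℝ (Fin p), μ.map T = μ)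
    (t : EuclideanSpace ℝ (Fin p)) :
    ‖charFun μ t - Complex.exp (-‖t‖ ^ 2 / 2 : ℝ)‖ ≤
      (1 + variance (fun x : ℝ => x ^ 2) (gaussianReal 0 1)) / 2 * ((1 + ‖t‖ ^ 2) / 2) / √p := by
  obtain ⟨hI, hV⟩ := gauss_norm_sq p
  set V := variance (fun x : ℝ => x ^ 2) (gaussianReal 0 1)
  have hp' : (0 : ℝ) < p := by exact_mod_cast hp
  have hsp : 0 < √(p : ℝ) := Real.sqrt_pos.2 hp'
  have hss : √(p : ℝ) ^ 2 = p := Real.sq_sqrt hp'.le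
  have h1 := charFun_avg p μ hsupp (‖t‖ / √p)
  rw [div_pow, hss, div_mul_cancel₀ _ hp'.ne'] at h1
  rw [← h1, norm_sub_rev]
  have hm : Measurable (charFun μ) := by fun_prop
  have hint : Integrable (fun g => charFun μ ((‖t‖ / √p) • g)) (stdGaussian (EuclideanSpace ℝ (Fin p))) := by
    refine Integrable.of_bound (by fun_prop) 1 (ae_of_all _ fun x => norm_charFun_le_one _)
  have h2 : charFun μ t = ∫ g, charFun μ t ∂(stdGaussian (EuclideanSpace ℝ (Fin p))) := by simp
  rw [h2, ← integral_sub hint (integrable_const _)]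
  have h3 : ∫ g, (1 / √p + (√p / p ^ 2) * (‖g‖ ^ 2 - p) ^ 2) / 2 * ((1 + ‖t‖ ^ 2) / 2) ∂(stdGaussian (EuclideanSpace ℝ (Fin p)))
    = (1 + V) / 2 * ((1 + ‖t‖ ^ 2) / 2) / √p := by
    rw [integral_mul_const, integral_div, integral_add (integrable_const _) (hI.const_mul _), integral_const_mul, hV]
    simp only [integral_const, probReal_univ, one_smul]
    have : √p / (p : ℝ) ^ 2 * (p * V) = V / √p := by
      have hs2 : √(p : ℝ) * √p = p := by rw [← pow_two, hss]
      rw [div_mul_eq_mul_div, div_eq_div_iff (by positivity) hsp.ne']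
      linear_combination (p * V) * hs2
    rw [this]; ring
  rw [← h3]
  refine norm_integral_le_of_norm_le (((((integrable_const _).add (hI.const_mul _)).div_const _).mul_const _)) (ae_of_all _ fun g => ?_)
  rw [charFun_norm_eq μ hinv ((‖t‖ / √p) • g) ((‖g‖ / √p) • t) (by
    rw [norm_smul, norm_smul]; simp [abs_of_pos hsp]; ring)]
  refine (charFun_scale p hp μ hsupp hinv t _).trans ?_
  gcongr
  set c := ‖g‖ / √p with hc
  have hc0 : 0 ≤ c := by positivity
  have e1 : ‖g‖ ^ 2 - p = p * (c ^ 2 - 1) := by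
    rw [hc, div_pow, hss]; field_simp
  have e2 : √p / (p : ℝ) ^ 2 * (‖g‖ ^ 2 - p) ^ 2 = √p * (c ^ 2 - 1) ^ 2 := by
    rw [e1]; field_simp
  rw [e2]
  have e3 : |c - 1| ≤ |c ^ 2 - 1| := by
    rw [show c ^ 2 - 1 = (c + 1) * (c - 1) by ring, abs_mul, abs_of_pos (by positivity : 0 < c + 1)]
    nlinarith [abs_nonneg (c - 1)]
  refine e3.trans ?_
  rw [← sq_abs (c ^ 2 - 1)]
  set z := |c ^ 2 - 1|
  have : 1 / √p + √p * z ^ 2 - 2 * z = (√p * z - 1) ^ 2 / √p := by field_simp; ring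
  have h5 : 0 ≤ (√p * z - 1) ^ 2 / √p := by positivity
  linarith

open ProbabilityTheory in
lemma gauss_box (n : ℕ) (a b : Fin n → ℝ) (hab : ∀ i, a i < b i) :
    (stdGaussian (EuclideanSpace ℝ (Fin n))) {x | ∀ i, a i ≤ x i ∧ x i ≤ b i} = 
     ENNReal.ofReal (∏ i : Fin n,
        ∫ x in (a i)..(b i), (2 * Real.pi) ^ (-(1 : ℝ) / 2) * Real.exp (-x ^ 2 / 2)) ∧
    (stdGaussian (EuclideanSpace ℝ (Fin n))) (frontier {x | ∀ i, a i ≤ x i ∧ x i ≤ b i}) = 0 := by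
  have hcl : IsClosed {x : EuclideanSpace ℝ (Fin n) | ∀ i, a i ≤ x i ∧ x i ≤ b i} := by
    simp only [Set.ofPred_forall, Set.ofPred_and]
    exact isClosed_iInter fun i => (isClosed_le (by fun_prop) (by fun_prop)).inter (isClosed_le (by fun_prop) (by fun_prop))
  rw [← map_pi_eq_stdGaussian]
  constructor
  · rw [Measure.map_apply (by fun_prop) hcl.measurableSet]
    have : (WithLp.toLp 2 ⁻¹' {x : EuclideanSpace ℝ (Fin n) | ∀ i, a i ≤ x i ∧ x i ≤ b i}) = Set.univ.pi fun i => Set.Icc (a i) (b i) := by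
      ext x; simp [Pi.le_def, forall_and]
    rw [this, Measure.pi_pi, ENNReal.ofReal_prod_of_nonneg]
    · refine Finset.prod_congr rfl fun i _ => ?_
      rw [gaussianReal_apply_eq_integral _ one_ne_zero, integral_Icc_eq_integral_Ioc, ← intervalIntegral.integral_of_le (hab i).le]
      congr 1
      refine intervalIntegral.integral_congr fun x _ => ?_
      simp only [gaussianPDFReal]
      rw [show (-(1:ℝ) / 2) = -(1 / 2) by ring, Real.rpow_neg (by positivity), ← Real.sqrt_eq_rpow]
      simp [neg_div]
    · intro i _
      exact intervalIntegral.integral_nonneg (hab i).le fun x _ => by positivity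
  · have hsub : frontier {x : EuclideanSpace ℝ (Fin n) | ∀ i, a i ≤ x i ∧ x i ≤ b i} ⊆ ⋃ i, {x | x i ∈ ({a i, b i} : Set ℝ)} := by
      intro x hx
      rw [frontier, hcl.closure_eq] at hx
      by_contra hcon
      simp only [Set.mem_iUnion, not_exists, Set.mem_ofPred_eq, Set.mem_insert_iff, Set.mem_singleton_iff, not_or] at hcon
      refine hx.2 ?_
      have ho : IsOpen {x : EuclideanSpace ℝ (Fin n) | ∀ i, a i < x i ∧ x i < b i} := by
        simp only [Set.ofPred_forall, Set.ofPred_and]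
        exact isOpen_iInter_of_finite fun i => (isOpen_lt (by fun_prop) (by fun_prop)).inter (isOpen_lt (by fun_prop) (by fun_prop))
      refine interior_maximal (fun y hy i => ⟨(hy i).1.le, (hy i).2.le⟩) ho ?_
      intro i
      exact ⟨lt_of_le_of_ne (hx.1 i).1 (Ne.symm (hcon i).1), lt_of_le_of_ne (hx.1 i).2 (hcon i).2⟩
    refine measure_mono_null hsub (measure_iUnion_null fun i => ?_)
    have hms : MeasurableSet ({a i, b i} : Set ℝ) := by measurability
    have hms' : MeasurableSet {x : EuclideanSpace ℝ (Fin n) | x i ∈ ({a i, b i} : Set ℝ)} := ((by fun_prop : Measurable fun x : EuclideanSpace ℝ (Fin n) => x i) hms)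
    rw [Measure.map_apply (by fun_prop) hms']
    have hpre := (measurePreserving_eval (fun _ : Fin n => gaussianReal 0 1) i).measure_preimage hms.nullMeasurableSet
    have h0 : gaussianReal 0 1 ({a i, b i} : Set ℝ) = 0 :=
      gaussianReal_absolutelyContinuous 0 one_ne_zero ((Set.toFinite _).measure_zero _)
    rw [h0] at hpre
    exact hpre

lemma embed (n j : ℕ) (t : EuclideanSpace ℝ (Fin n)) : ∃ s : EuclideanSpace ℝ (Fin (n + j)), ‖s‖ = ‖t‖ ∧
    ∀ x : EuclideanSpace ℝ (Fin (n + j)), inner ℝ (WithLp.toLp 2 (fun i => x (Fin.castLE (Nat.le_add_right n j) i)) : EuclideanSpace ℝ (Fin n)) t = inner ℝ x s := by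
  refine ⟨WithLp.toLp 2 (Fin.append t.ofLp 0), ?_, fun x => ?_⟩
  · rw [EuclideanSpace.norm_eq, EuclideanSpace.norm_eq, Fin.sum_univ_add]
    simp
  · simp only [PiLp.inner_apply, Fin.sum_univ_add]
    simp
    rfl

/-- Poincaré's Observation: fix `n` and `aᵢ < bᵢ`. If `X^{(p)}` is uniformly
distributed on the sphere of radius `√p` in `ℝ^p` (here `p = n + j`, `j → ∞`), then
`P(aᵢ ≤ Xᵢ^{(p)} ≤ bᵢ, i = 1,...,n)` converges, as `p → ∞`, to
`∏ᵢ ∫_{aᵢ}^{bᵢ} (2π)^{-1/2} e^{-x²/2} dx`. -/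
theorem poincare_observation (n : ℕ) (hn : 1 ≤ n) (a b : Fin n → ℝ)
    (hab : ∀ i, a i < b i)
    (μ : ∀ j : ℕ, Measure (EuclideanSpace ℝ (Fin (n + j))))
    (hprob : ∀ j, IsProbabilityMeasure (μ j))
    (hsupp : ∀ j, (μ j) {x | ‖x‖ = Real.sqrt (n + j)}ᶜ = 0)
    (hinv : ∀ j, ∀ T : EuclideanSpace ℝ (Fin (n + j)) ≃ₗᵢ[ℝ] EuclideanSpace ℝ (Fin (n + j)),
      (μ j).map T = μ j) :
    Tendsto (fun j : ℕ =>
        ((μ j) {x : EuclideanSpace ℝ (Fin (n + j)) |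
          ∀ i : Fin n, a i ≤ x (Fin.castLE (Nat.le_add_right n j) i) ∧
            x (Fin.castLE (Nat.le_add_right n j) i) ≤ b i}).toReal)
      atTop
      (nhds (∏ i : Fin n,
        ∫ x in (a i)..(b i), (2 * Real.pi) ^ (-(1 : ℝ) / 2) * Real.exp (-x ^ 2 / 2))) := by
  set P : ∀ j : ℕ, EuclideanSpace ℝ (Fin (n + j)) → EuclideanSpace ℝ (Fin n) := fun j x =>
    WithLp.toLp 2 (fun i => x (Fin.castLE (Nat.le_add_right n j) i)) with hP
  have hPm (j : ℕ) : Measurable (P j) := by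
    have : Continuous (P j) := by rw [hP]; fun_prop
    exact this.measurable
  let ν : ℕ → ProbabilityMeasure (EuclideanSpace ℝ (Fin n)) := fun j =>
    ⟨(μ j).map (P j), Measure.isProbabilityMeasure_map (hPm j).aemeasurable⟩
  let γ : ProbabilityMeasure (EuclideanSpace ℝ (Fin n)) :=
    ⟨ProbabilityTheory.stdGaussian _, inferInstance⟩
  have hconv : Tendsto ν atTop (nhds γ) := by
    refine ProbabilityMeasure.tendsto_iff_tendsto_charFun.2 fun t => ?_
    rw [tendsto_iff_norm_sub_tendsto_zero]
    set C := (1 + ProbabilityTheory.variance (fun x : ℝ => x ^ 2)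
      (ProbabilityTheory.gaussianReal 0 1)) / 2 * ((1 + ‖t‖ ^ 2) / 2) with hC
    have hlim : Tendsto (fun j : ℕ => C / √((n + j : ℕ) : ℝ)) atTop (nhds 0) := by
      refine Tendsto.div_atTop tendsto_const_nhds ?_
      refine Real.tendsto_sqrt_atTop.comp (tendsto_natCast_atTop_atTop.comp ?_)
      exact tendsto_atTop_mono (fun j => Nat.le_add_left j n) tendsto_id
    refine squeeze_zero (fun _ => norm_nonneg _) (fun j => ?_) hlim
    haveI := hprob j
    obtain ⟨s, hs, hin⟩ := embed n j t
    have e1 : charFun ((ν j : ProbabilityMeasure _) : Measure (EuclideanSpace ℝ (Fin n))) t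
        = charFun (μ j) s := by
      change charFun ((μ j).map (P j)) t = _
      rw [charFun_apply, charFun_apply, integral_map (hPm j).aemeasurable (by fun_prop)]
      simp_rw [← hin]
      rfl
    have e2 : charFun ((γ : ProbabilityMeasure _) : Measure (EuclideanSpace ℝ (Fin n))) t
        = Complex.exp (-‖s‖ ^ 2 / 2 : ℝ) := by
      change charFun (ProbabilityTheory.stdGaussian _) t = _
      rw [ProbabilityTheory.charFun_stdGaussian, hs]
      push_cast; rfl
    rw [e1, e2, hC, ← hs]
    refine charFun_bound (n + j) (by omega) (μ j) ?_ (hinv j) s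
    have := hsupp j
    rw [← mem_ae_iff] at this
    filter_upwards [this] with x hx
    have hx' : ‖x‖ = √((n : ℝ) + j) := hx
    rw [hx']; push_cast; rfl
  obtain ⟨g1, g2⟩ := gauss_box n a b hab
  have key := ProbabilityMeasure.tendsto_measure_of_null_frontier_of_tendsto' hconv
    (E := {x | ∀ i, a i ≤ x i ∧ x i ≤ b i}) g2
  have hms : MeasurableSet {x : EuclideanSpace ℝ (Fin n) | ∀ i, a i ≤ x i ∧ x i ≤ b i} := by
    simp only [Set.ofPred_forall, Set.ofPred_and]
    exact MeasurableSet.iInter fun i => (measurableSet_le (by fun_prop) (by fun_prop)).inter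
      (measurableSet_le (by fun_prop) (by fun_prop))
  have key2 := (ENNReal.tendsto_toReal (measure_ne_top _ _)).comp key
  have hγ : ((γ : ProbabilityMeasure _) : Measure (EuclideanSpace ℝ (Fin n)))
      {x | ∀ i, a i ≤ x i ∧ x i ≤ b i} = ENNReal.ofReal _ := g1
  rw [hγ, ENNReal.toReal_ofReal (Finset.prod_nonneg fun i _ =>
    intervalIntegral.integral_nonneg (hab i).le fun x _ => by positivity)] at key2
  refine key2.congr fun j => ?_
  change (((μ j).map (P j)) _).toReal = _
  rw [Measure.map_apply (hPm j) hms]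
  rfl
end
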